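/- Let G be a finite-dimensional Hopf algebra, M a bialgebra with a commuting pair of G-coactions (λ, ρ) satisfying λ = (κ ⊗ id) ∘ Δ_M and ρ = (id ⊗ κ) ∘ Δ_M for a bialgebra map κ : M → G. Then on the diagonal crossed product B := M ⋈ Ĝ, the maps Δ_B(m ⋈ ψ) := (m^(1) ⋈ ψ₍₂₎) ⊗ (m^(2) ⋈ ψ₍₁₎) and ε_B(m ⋈ ψ) := ε_M(m)ε̂(ψ) are algebra homomorphisms Δ_B : B → B ⊗ B and ε_B : B → ℂ. -/

import Mathlib

open TensorProduct

/-- The Sweedler shuffle `φ ↦ (φ₍₁₎ ⊗ φ₍₃₎) ⊗ φ₍₂₎`. -/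
noncomputable def sweedlerShuffle (H : Type*) [Ring H] [HopfAlgebra ℂ H] :
    H →ₗ[ℂ] (H ⊗[ℂ] H) ⊗[ℂ] H :=
  (TensorProduct.assoc ℂ H H H).symm.toLinearMap ∘ₗ
    TensorProduct.map LinearMap.id (TensorProduct.comm ℂ H H).toLinearMap ∘ₗ
    TensorProduct.map LinearMap.id (Coalgebra.comul (R := ℂ)) ∘ₗ
    Coalgebra.comul (R := ℂ)

/-!
The maps `Δ_B` and `ε_B` are the comultiplication and counit of the tensor product bialgebra
`M ⊗ Ĝ^cop`. In terms of that bialgebra, the crossed product is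
`(m ⋈ φ)(n ⋈ ψ) = (m ⊗ 1) T(n ⊗ φ) (1 ⊗ ψ)`, where `T(c) = u⁻¹(c₍₁₎) c₍₂₎ u(c₍₃₎)` is the coinner
endomorphism of the coalgebra `M ⊗ Ĝ^cop` attached to the functional `u(n ⊗ φ) = ⟨κ(n) | φ⟩`. This
`u` is convolution invertible because `Ĝ^cop` is a Hopf algebra with antipode `Ŝ⁻¹`. Coinner
endomorphisms are coalgebra maps, hence so is the crossed product `B ⊗ B → B`, and this says that
`Δ_B` and `ε_B` are multiplicative.
-/

open Coalgebra (comul counit)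
open WithConv
open scoped Coalgebra

section HitActions

variable {R C : Type*} [CommSemiring R] [AddCommMonoid C] [Module R C] [Coalgebra R C]

/-- The left hit action `f ⇀ c = c₍₁₎ f(c₍₂₎)` of the convolution algebra of functionals on a
coalgebra. -/
noncomputable def leftHit : WithConv (C →ₗ[R] R) →ₗ[R] C →ₗ[R] C where
  toFun f := (TensorProduct.rid R C).toLinearMap ∘ₗ f.ofConv.lTensor C ∘ₗ comul
  map_add' f g := by simp [LinearMap.lTensor_add, LinearMap.add_comp, LinearMap.comp_add]
  map_smul' r f := by simp [LinearMap.lTensor_smul, LinearMap.smul_comp, LinearMap.comp_smul]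

/-- The right hit action `c ↼ f = f(c₍₁₎) c₍₂₎` of the convolution algebra of functionals on a
coalgebra. -/
noncomputable def rightHit : WithConv (C →ₗ[R] R) →ₗ[R] C →ₗ[R] C where
  toFun f := (TensorProduct.lid R C).toLinearMap ∘ₗ f.ofConv.rTensor C ∘ₗ comul
  map_add' f g := by simp [LinearMap.rTensor_add, LinearMap.add_comp, LinearMap.comp_add]
  map_smul' r f := by simp [LinearMap.rTensor_smul, LinearMap.smul_comp, LinearMap.comp_smul]

theorem leftHit_apply (f : WithConv (C →ₗ[R] R)) (c : C) :
    leftHit f c = TensorProduct.rid R C (f.ofConv.lTensor C (comul c)) := rfl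

theorem rightHit_apply (f : WithConv (C →ₗ[R] R)) (c : C) :
    rightHit f c = TensorProduct.lid R C (f.ofConv.rTensor C (comul c)) := rfl

theorem comul_comp_leftHit (f : WithConv (C →ₗ[R] R)) :
    comul ∘ₗ leftHit f = (leftHit f).lTensor C ∘ₗ comul := by
  let slice := (TensorProduct.rid R C).toLinearMap ∘ₗ f.ofConv.lTensor C
  have comul_slice : comul ∘ₗ slice =
      ((TensorProduct.rid R (C ⊗[R] C)).toLinearMap ∘ₗ f.ofConv.lTensor (C ⊗[R] C)) ∘ₗ
        comul.rTensor C := by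
    ext; simp [slice]
  have slice_assoc : slice.lTensor C ∘ₗ (TensorProduct.assoc R C C C).toLinearMap =
      (TensorProduct.rid R (C ⊗[R] C)).toLinearMap ∘ₗ f.ofConv.lTensor (C ⊗[R] C) := by
    ext; simp [slice]
  calc comul ∘ₗ leftHit f = (comul ∘ₗ slice) ∘ₗ comul := rfl
    _ = slice.lTensor C ∘ₗ
          ((TensorProduct.assoc R C C C).toLinearMap ∘ₗ comul.rTensor C ∘ₗ comul) := by
        rw [comul_slice, ← slice_assoc]; rfl
    _ = slice.lTensor C ∘ₗ (comul.lTensor C ∘ₗ comul) := by rw [Coalgebra.coassoc]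
    _ = (leftHit f).lTensor C ∘ₗ comul := by
        rw [← LinearMap.comp_assoc, ← LinearMap.lTensor_comp]; rfl

theorem lTensor_rightHit_comp_comul (f : WithConv (C →ₗ[R] R)) :
    (rightHit f).lTensor C ∘ₗ comul = (leftHit f).rTensor C ∘ₗ comul := by
  have slice_assoc : ((TensorProduct.lid R C).toLinearMap ∘ₗ f.ofConv.rTensor C).lTensor C ∘ₗ
      (TensorProduct.assoc R C C C).toLinearMap =
      ((TensorProduct.rid R C).toLinearMap ∘ₗ f.ofConv.lTensor C).rTensor C := by
    ext; simp [smul_tmul]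
  calc (rightHit f).lTensor C ∘ₗ comul
      = ((TensorProduct.lid R C).toLinearMap ∘ₗ f.ofConv.rTensor C).lTensor C ∘ₗ
          (comul.lTensor C ∘ₗ comul) := by
        rw [← LinearMap.comp_assoc, ← LinearMap.lTensor_comp]; rfl
    _ = ((TensorProduct.rid R C).toLinearMap ∘ₗ f.ofConv.lTensor C).rTensor C ∘ₗ
          comul.rTensor C ∘ₗ comul := by
        rw [← Coalgebra.coassoc, ← slice_assoc]; rfl
    _ = (leftHit f).rTensor C ∘ₗ comul := by
        rw [← LinearMap.comp_assoc, ← LinearMap.rTensor_comp]; rfl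

theorem comul_comp_rightHit (f : WithConv (C →ₗ[R] R)) :
    comul ∘ₗ rightHit f = (rightHit f).rTensor C ∘ₗ comul := by
  let slice := (TensorProduct.lid R C).toLinearMap ∘ₗ f.ofConv.rTensor C
  have comul_slice : comul ∘ₗ slice =
      ((TensorProduct.lid R (C ⊗[R] C)).toLinearMap ∘ₗ f.ofConv.rTensor (C ⊗[R] C)) ∘ₗ
        comul.lTensor C := by
    ext; simp [slice]
  have slice_assoc : slice.rTensor C =
      ((TensorProduct.lid R (C ⊗[R] C)).toLinearMap ∘ₗ f.ofConv.rTensor (C ⊗[R] C)) ∘ₗ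
        (TensorProduct.assoc R C C C).toLinearMap := by
    ext; simp [slice, smul_tmul']
  calc comul ∘ₗ rightHit f = (comul ∘ₗ slice) ∘ₗ comul := rfl
    _ = ((TensorProduct.lid R (C ⊗[R] C)).toLinearMap ∘ₗ f.ofConv.rTensor (C ⊗[R] C)) ∘ₗ
          (comul.lTensor C ∘ₗ comul) := by
        rw [comul_slice]; rfl
    _ = slice.rTensor C ∘ₗ comul.rTensor C ∘ₗ comul := by
        rw [← Coalgebra.coassoc, slice_assoc]; rfl
    _ = (rightHit f).rTensor C ∘ₗ comul := by
        rw [← LinearMap.comp_assoc, ← LinearMap.rTensor_comp]; rfl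

theorem leftHit_comp_rightHit (f g : WithConv (C →ₗ[R] R)) :
    leftHit f ∘ₗ rightHit g = rightHit g ∘ₗ leftHit f := by
  have slice_rTensor : ((TensorProduct.rid R C).toLinearMap ∘ₗ f.ofConv.lTensor C) ∘ₗ
      (rightHit g).rTensor C =
      rightHit g ∘ₗ (TensorProduct.rid R C).toLinearMap ∘ₗ f.ofConv.lTensor C := by
    ext; simp
  calc leftHit f ∘ₗ rightHit g
      = ((TensorProduct.rid R C).toLinearMap ∘ₗ f.ofConv.lTensor C) ∘ₗ
          (comul ∘ₗ rightHit g) := rfl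
    _ = rightHit g ∘ₗ leftHit f := by
        rw [comul_comp_rightHit, ← LinearMap.comp_assoc, slice_rTensor]; rfl

theorem counit_comp_leftHit (f : WithConv (C →ₗ[R] R)) : counit ∘ₗ leftHit f = f.ofConv := by
  have counit_slice : counit ∘ₗ (TensorProduct.rid R C).toLinearMap ∘ₗ f.ofConv.lTensor C =
      f.ofConv ∘ₗ (TensorProduct.lid R C).toLinearMap ∘ₗ counit.rTensor C := by
    ext; simp [mul_comm]
  ext c
  simpa only [LinearMap.comp_apply, LinearEquiv.coe_coe, leftHit_apply,
    Coalgebra.rTensor_counit_comul, lid_tmul, one_smul] using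
    LinearMap.congr_fun counit_slice (comul c)

theorem comp_rightHit (f g : WithConv (C →ₗ[R] R)) :
    g.ofConv ∘ₗ rightHit f = (f * g).ofConv := by
  have comp_slice : g.ofConv ∘ₗ (TensorProduct.lid R C).toLinearMap ∘ₗ f.ofConv.rTensor C =
      LinearMap.mul' R R ∘ₗ TensorProduct.map f.ofConv g.ofConv := by
    ext; simp
  exact congrArg (· ∘ₗ comul) comp_slice

theorem rightHit_mul (f g : WithConv (C →ₗ[R] R)) :
    rightHit (f * g) = rightHit g ∘ₗ rightHit f := by
  calc rightHit (f * g)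
      = ((TensorProduct.lid R C).toLinearMap ∘ₗ g.ofConv.rTensor C) ∘ₗ
          ((rightHit f).rTensor C ∘ₗ comul) := by
        rw [← LinearMap.comp_assoc, LinearMap.comp_assoc ((rightHit f).rTensor C),
          ← LinearMap.rTensor_comp, comp_rightHit]; rfl
    _ = rightHit g ∘ₗ rightHit f := by rw [← comul_comp_rightHit]; rfl

theorem rightHit_one : rightHit (1 : WithConv (C →ₗ[R] R)) = LinearMap.id := by
  ext c
  simp [rightHit_apply, LinearMap.convOne_def]

/-- The coinner endomorphism `c ↦ u⁻¹(c₍₁₎) c₍₂₎ u(c₍₃₎)` of a coalgebra attached to a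
convolution-invertible functional `u`. -/
noncomputable def coinnerHom (u : (WithConv (C →ₗ[R] R))ˣ) : C →ₗc[R] C where
  __ := rightHit u⁻¹.val ∘ₗ leftHit u.val
  counit_comp := by
    rw [← leftHit_comp_rightHit, ← LinearMap.comp_assoc, counit_comp_leftHit, comp_rightHit,
      u.inv_mul]
    ext; simp [LinearMap.convOne_def]
  map_comp_comul := by
    have leg : (rightHit u⁻¹.val ∘ₗ leftHit u.val) ∘ₗ rightHit u.val = leftHit u.val := by
      rw [← leftHit_comp_rightHit, LinearMap.comp_assoc, ← rightHit_mul, u.mul_inv, rightHit_one,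
        LinearMap.comp_id]
    calc TensorProduct.map (rightHit u⁻¹.val ∘ₗ leftHit u.val)
          (rightHit u⁻¹.val ∘ₗ leftHit u.val) ∘ₗ comul
        = TensorProduct.map (rightHit u⁻¹.val) (rightHit u⁻¹.val ∘ₗ leftHit u.val) ∘ₗ
            (leftHit u.val).rTensor C ∘ₗ comul := by
          rw [← LinearMap.comp_assoc, LinearMap.map_comp_rTensor]
      _ = TensorProduct.map (rightHit u⁻¹.val) (leftHit u.val) ∘ₗ comul := by
          rw [← lTensor_rightHit_comp_comul, ← LinearMap.comp_assoc,
            LinearMap.map_comp_lTensor, leg]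
      _ = (rightHit u⁻¹.val).rTensor C ∘ₗ ((leftHit u.val).lTensor C ∘ₗ comul) := by
          rw [← LinearMap.comp_assoc, LinearMap.rTensor_comp_lTensor]
      _ = comul ∘ₗ rightHit u⁻¹.val ∘ₗ leftHit u.val := by
          rw [← comul_comp_leftHit, ← LinearMap.comp_assoc, ← comul_comp_rightHit]; rfl

theorem coinnerHom_apply (u : (WithConv (C →ₗ[R] R))ˣ) (c : C) :
    coinnerHom u c = rightHit u⁻¹.val (leftHit u.val c) := rfl

end HitActions

section ConvolutionUnits

variable {R K A : Type*} [CommSemiring R] [Semiring K] [Semiring A] [Algebra R A]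

open HopfAlgebra in
/-- An algebra homomorphism `f` out of a Hopf algebra, as a unit of the convolution algebra with
inverse `f ∘ S`. -/
noncomputable def convUnitOfAlgHom [HopfAlgebra R K] (f : K →ₐ[R] A) :
    (WithConv (K →ₗ[R] A))ˣ where
  val := toConv f.toLinearMap
  inv := toConv (f.toLinearMap ∘ₗ antipode R)
  val_inv := by
    have h := LinearMap.algHom_comp_convMul_distrib f (toConv .id) (toConv (antipode R (A := K)))
    rw [LinearMap.id_mul_antipode] at h
    ext x
    simpa using (LinearMap.congr_fun h x).symm
  inv_val := by
    have h := LinearMap.algHom_comp_convMul_distrib f (toConv (antipode R (A := K))) (toConv .id)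
    rw [LinearMap.antipode_mul_id] at h
    ext x
    simpa using (LinearMap.congr_fun h x).symm

end ConvolutionUnits

section TensorProductCoalgebra

variable {R M K : Type*} [CommSemiring R] [AddCommMonoid M] [Module R M] [Coalgebra R M]
  [AddCommMonoid K] [Module R K] [Coalgebra R K]

theorem comul_tmul_eq_sum {ι κ : Type*} {m : M} {k : K} (r : Coalgebra.Repr R m ι)
    (s : Coalgebra.Repr R k κ) :
    comul (R := R) (m ⊗ₜ[R] k) = ∑ j ∈ s.index, ∑ i ∈ r.index,
      (r.left i ⊗ₜ[R] s.left j) ⊗ₜ[R] (r.right i ⊗ₜ[R] s.right j) := by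
  rw [TensorProduct.comul_tmul, ← r.eq, ← s.eq]
  simp only [sum_tmul, tmul_sum, map_sum, AlgebraTensorModule.tensorTensorTensorComm_tmul]

/-- Uncurrying `f ↦ (m ⊗ k ↦ f k m)`, as a homomorphism of convolution algebras. -/
noncomputable def convUncurry :
    WithConv (K →ₗ[R] WithConv (M →ₗ[R] R)) →* WithConv (M ⊗[R] K →ₗ[R] R) where
  toFun f := toConv <| TensorProduct.lift
    ((WithConv.linearEquiv R (M →ₗ[R] R)).toLinearMap ∘ₗ f.ofConv).flip
  map_one' := by
    ext m k
    simp
  map_mul' f g := by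
    ext m k
    simp [LinearMap.convMul_apply _ _ (m ⊗ₜ[R] k), comul_tmul_eq_sum (ℛ R m) (ℛ R k),
      (ℛ R m).convMul_apply, (ℛ R k).convMul_apply]

theorem leftHit_convUncurry_tmul (f : WithConv (K →ₗ[R] WithConv (M →ₗ[R] R))) (m : M) (k : K) :
    leftHit (convUncurry f) (m ⊗ₜ[R] k) =
      TensorProduct.map (leftHit.flip m ∘ₗ f.ofConv) LinearMap.id
        (TensorProduct.comm R K K (comul k)) := by
  rw [leftHit_apply, comul_tmul_eq_sum (ℛ R m) (ℛ R k), ← (ℛ R k).eq]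
  simp [leftHit_apply, ← (ℛ R m).eq, convUncurry, sum_tmul, smul_tmul']

theorem rightHit_convUncurry_tmul (f : WithConv (K →ₗ[R] WithConv (M →ₗ[R] R))) (m : M) (k : K) :
    rightHit (convUncurry f) (m ⊗ₜ[R] k) =
      TensorProduct.map (rightHit.flip m ∘ₗ f.ofConv) LinearMap.id (comul k) := by
  rw [rightHit_apply, comul_tmul_eq_sum (ℛ R m) (ℛ R k), ← (ℛ R k).eq]
  simp [rightHit_apply, ← (ℛ R m).eq, convUncurry, sum_tmul, smul_tmul']

end TensorProductCoalgebra

/-- The co-opposite `C^cop` of a coalgebra `C`: a type synonym carrying the comultiplication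
`c ↦ c₍₂₎ ⊗ c₍₁₎` and, for bialgebras, the same product. -/
def Coopposite (C : Type*) : Type _ := C

namespace Coopposite

variable {R C H : Type*} [CommSemiring R]

instance [AddCommMonoid C] : AddCommMonoid (Coopposite C) := inferInstanceAs (AddCommMonoid C)

instance [AddCommMonoid C] [Module R C] : Module R (Coopposite C) := inferInstanceAs (Module R C)

theorem coassoc_comm_comp_comul [AddCommMonoid C] [Module R C] [Coalgebra R C] :
    (TensorProduct.assoc R C C C).toLinearMap ∘ₗ
        ((TensorProduct.comm R C C).toLinearMap ∘ₗ comul).rTensor C ∘ₗ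
          (TensorProduct.comm R C C).toLinearMap ∘ₗ comul =
      ((TensorProduct.comm R C C).toLinearMap ∘ₗ comul).lTensor C ∘ₗ
        (TensorProduct.comm R C C).toLinearMap ∘ₗ comul := by
  let swapLeft := (TensorProduct.assoc R C C C).toLinearMap ∘ₗ
    (TensorProduct.comm R C C).toLinearMap.rTensor C ∘ₗ
      (TensorProduct.comm R C (C ⊗[R] C)).toLinearMap
  let swapRight := (TensorProduct.comm R C C).toLinearMap.lTensor C ∘ₗ
    (TensorProduct.comm R (C ⊗[R] C) C).toLinearMap
  have comul_left : (TensorProduct.assoc R C C C).toLinearMap ∘ₗ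
      ((TensorProduct.comm R C C).toLinearMap ∘ₗ comul).rTensor C ∘ₗ
        (TensorProduct.comm R C C).toLinearMap = swapLeft ∘ₗ comul.lTensor C := by
    ext; simp [swapLeft]
  have comul_right : ((TensorProduct.comm R C C).toLinearMap ∘ₗ comul).lTensor C ∘ₗ
      (TensorProduct.comm R C C).toLinearMap = swapRight ∘ₗ comul.rTensor C := by
    ext; simp [swapRight]
  have swap_assoc : swapLeft ∘ₗ (TensorProduct.assoc R C C C).toLinearMap = swapRight := by
    ext; simp [swapLeft, swapRight]
  calc _ = swapLeft ∘ₗ (comul.lTensor C ∘ₗ comul) := congrArg (· ∘ₗ comul) comul_left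
    _ = swapRight ∘ₗ comul.rTensor C ∘ₗ comul := by
        rw [← Coalgebra.coassoc, ← swap_assoc]; rfl
    _ = _ := (congrArg (· ∘ₗ comul) comul_right).symm

noncomputable instance [AddCommMonoid C] [Module R C] [Coalgebra R C] :
    Coalgebra R (Coopposite C) where
  comul := (TensorProduct.comm R C C).toLinearMap ∘ₗ comul (A := C)
  counit := (counit : C →ₗ[R] R)
  coassoc := have h := coassoc_comm_comp_comul (R := R) (C := C); h
  rTensor_counit_comp_comul := by
    have rTensor_comm : (counit (R := R) (A := C)).rTensor C ∘ₗ
        (TensorProduct.comm R C C).toLinearMap =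
          (TensorProduct.comm R C R).toLinearMap ∘ₗ counit.lTensor C := by
      ext; simp
    have counit_left : (counit (R := R) (A := C)).rTensor C ∘ₗ
        (TensorProduct.comm R C C).toLinearMap ∘ₗ comul = TensorProduct.mk R R C 1 := by
      rw [← LinearMap.comp_assoc, rTensor_comm, LinearMap.comp_assoc,
        Coalgebra.lTensor_counit_comp_comul]
      rfl
    exact counit_left
  lTensor_counit_comp_comul := by
    have lTensor_comm : (counit (R := R) (A := C)).lTensor C ∘ₗ
        (TensorProduct.comm R C C).toLinearMap =
          (TensorProduct.comm R R C).toLinearMap ∘ₗ counit.rTensor C := by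
      ext; simp
    have counit_right : (counit (R := R) (A := C)).lTensor C ∘ₗ
        (TensorProduct.comm R C C).toLinearMap ∘ₗ comul = (TensorProduct.mk R C R).flip 1 := by
      rw [← LinearMap.comp_assoc, lTensor_comm, LinearMap.comp_assoc,
        Coalgebra.rTensor_counit_comp_comul]
      rfl
    exact counit_right

instance [Semiring C] : Semiring (Coopposite C) := inferInstanceAs (Semiring C)

instance [Semiring C] [Algebra R C] : Algebra R (Coopposite C) := inferInstanceAs (Algebra R C)

noncomputable instance [Semiring C] [Bialgebra R C] : Bialgebra R (Coopposite C) :=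
  Bialgebra.mk' R (Coopposite C) (Bialgebra.counit_one (R := R) (A := C))
    (fun {a b} ↦ Bialgebra.counit_mul (R := R) (A := C) a b)
    (congrArg (TensorProduct.comm R C C) (Bialgebra.comul_one (R := R) (A := C)))
    (fun {a b} ↦ (congrArg (TensorProduct.comm R C C)
      (Bialgebra.comul_mul (R := R) (A := C) a b)).trans
        (map_mul (Algebra.TensorProduct.comm R C C) _ _))

open HopfAlgebra in
/-- The co-opposite of a Hopf algebra whose antipode is bijective, with antipode `S⁻¹`. -/
@[reducible] noncomputable def hopfAlgebra [Semiring H] [HopfAlgebra R H] (Si : H →ₗ[R] H)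
    (h₁ : ∀ x, Si (antipode R x) = x) (h₂ : ∀ x, antipode R (Si x) = x) :
    HopfAlgebra R (Coopposite H) where
  antipode := (Si : H →ₗ[R] H)
  mul_antipode_rTensor_comul := by
    refine LinearMap.ext fun (x : H) ↦ Function.LeftInverse.injective h₁ ?_
    change antipode R (LinearMap.mul' R H (Si.rTensor H (TensorProduct.comm R H H (comul x)))) =
      antipode R (algebraMap R H (counit x))
    rw [← (ℛ R x).eq]
    simp [antipode_mul_antidistrib, h₂, Algebra.algebraMap_eq_smul_one, sum_antipode_mul_eq_smul]
  mul_antipode_lTensor_comul := by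
    refine LinearMap.ext fun (x : H) ↦ Function.LeftInverse.injective h₁ ?_
    change antipode R (LinearMap.mul' R H (Si.lTensor H (TensorProduct.comm R H H (comul x)))) =
      antipode R (algebraMap R H (counit x))
    rw [← (ℛ R x).eq]
    simp [antipode_mul_antidistrib, h₂, Algebra.algebraMap_eq_smul_one, sum_mul_antipode_eq_smul]

end Coopposite

section CoalgebraMultiplication

variable {R C : Type*} [CommSemiring R] [AddCommMonoid C] [Module R C] [Coalgebra R C]

theorem comul_coalgHom_tmul (F : C ⊗[R] C →ₗc[R] C)
    {mulCC : C ⊗[R] C →ₗ[R] C ⊗[R] C →ₗ[R] C ⊗[R] C}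
    (hmulCC : ∀ x y x' y', mulCC (x ⊗ₜ[R] y) (x' ⊗ₜ[R] y') = F (x ⊗ₜ[R] x') ⊗ₜ[R] F (y ⊗ₜ[R] y'))
    (x y : C) :
    comul (R := R) (F (x ⊗ₜ[R] y)) = mulCC (comul x) (comul y) := by
  have mulCC_eq : TensorProduct.map F.toLinearMap F.toLinearMap ∘ₗ
      (TensorProduct.tensorTensorTensorComm R C C C C).toLinearMap = TensorProduct.lift mulCC := by
    ext x y x' y'
    simp [hmulCC]
  calc comul (R := R) (F (x ⊗ₜ[R] y))
      = TensorProduct.map F.toLinearMap F.toLinearMap (comul (x ⊗ₜ[R] y)) :=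
        (CoalgHomClass.map_comp_comul_apply F _).symm
    _ = mulCC (comul x) (comul y) := LinearMap.congr_fun mulCC_eq (comul x ⊗ₜ[R] comul y)

theorem counit_coalgHom_tmul (F : C ⊗[R] C →ₗc[R] C) (x y : C) :
    counit (R := R) (F (x ⊗ₜ[R] y)) = counit (R := R) x * counit (R := R) y := by
  rw [CoalgHomClass.counit_comp_apply, TensorProduct.counit_tmul, smul_eq_mul, mul_comm]

end CoalgebraMultiplication

section PairingTwist

variable {R M K : Type*} [CommSemiring R] [AddCommMonoid M] [Module R M] [Coalgebra R M]
  [Semiring K] [HopfAlgebra R K]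

/-- The coinner endomorphism of the coalgebra `M ⊗ K` attached to the pairing
`m ⊗ k ↦ β(k)(m)`, where `β` is an algebra homomorphism from a Hopf algebra `K` to the convolution
algebra of functionals on `M`. -/
noncomputable def pairingTwist (β : K →ₐ[R] WithConv (M →ₗ[R] R)) :
    M ⊗[R] K →ₗc[R] M ⊗[R] K :=
  coinnerHom (Units.map convUncurry (convUnitOfAlgHom β))

theorem pairingTwist_tmul (β : K →ₐ[R] WithConv (M →ₗ[R] R)) (m : M)
    {ι : Type*} {k : K} (r : Coalgebra.Repr R k ι) :
    pairingTwist β (m ⊗ₜ[R] k) = ∑ i ∈ r.index,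
      TensorProduct.map (leftHit (β (r.right i)) ∘ₗ rightHit.flip m ∘ₗ β.toLinearMap ∘ₗ
        HopfAlgebra.antipode R) LinearMap.id (comul (r.left i)) := by
  have leftHit_tmul : leftHit (convUncurry (toConv β.toLinearMap)) (m ⊗ₜ[R] k) =
      ∑ i ∈ r.index, leftHit (β (r.right i)) m ⊗ₜ[R] r.left i := by
    simp [leftHit_convUncurry_tmul, ← r.eq]
  calc pairingTwist β (m ⊗ₜ[R] k)
      = rightHit (convUncurry (toConv (β.toLinearMap ∘ₗ HopfAlgebra.antipode R)))
          (leftHit (convUncurry (toConv β.toLinearMap)) (m ⊗ₜ[R] k)) := rfl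
    _ = _ := by
      rw [leftHit_tmul, map_sum]
      refine Finset.sum_congr rfl fun i _ ↦ ?_
      rw [rightHit_convUncurry_tmul]
      congr 2
      ext x : 1
      exact (LinearMap.congr_fun (leftHit_comp_rightHit _ _) m).symm

end PairingTwist

/-- The convolution-algebra form of a bilinear pairing that turns the comultiplication of `M` into
the multiplication of `H`: the homomorphism `φ ↦ B(-, φ)`. -/
noncomputable def pairingAlgHom {R M H : Type*} [CommSemiring R] [AddCommMonoid M] [Module R M]
    [Coalgebra R M] [Semiring H] [Algebra R H] (B : M →ₗ[R] H →ₗ[R] R)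
    (hmul : ∀ m φ ψ, B m (φ * ψ) =
      LinearMap.mul' R R (TensorProduct.map (B.flip φ) (B.flip ψ) (comul m)))
    (hone : ∀ m, B m 1 = counit (R := R) m) : H →ₐ[R] WithConv (M →ₗ[R] R) :=
  AlgHom.ofLinearMap ((WithConv.linearEquiv R (M →ₗ[R] R)).symm.toLinearMap ∘ₗ B.flip)
    (by ext m; simpa using hone m)
    (fun φ ψ ↦ by ext m; exact hmul m φ ψ)

section CrossedProduct

variable {R M K : Type*} [CommSemiring R] [Semiring M] [Bialgebra R M] [Semiring K]
  [Bialgebra R K]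

/-- The multiplication of `M ⊗ K` twisted by a coalgebra endomorphism `T`, which sends
`(m ⊗ k) ⊗ (n ⊗ l)` to `(m ⊗ 1) T(n ⊗ k) (1 ⊗ l)`. -/
noncomputable def crossedMul (T : M ⊗[R] K →ₗc[R] M ⊗[R] K) :
    (M ⊗[R] K) ⊗[R] (M ⊗[R] K) →ₗc[R] M ⊗[R] K :=
  let mulOuter := (Coalgebra.TensorProduct.map (Bialgebra.mulCoalgHom R M)
    (Bialgebra.mulCoalgHom R K)).comp
      (Coalgebra.TensorProduct.assoc R R M M (K ⊗[R] K)).symm.toCoalgHom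
  let twistInner := (Coalgebra.TensorProduct.assoc R R M K K).toCoalgHom.comp <|
    (Coalgebra.TensorProduct.map (T.comp (Bialgebra.TensorProduct.comm R K M).toCoalgHom)
      (CoalgHom.id R K)).comp (Coalgebra.TensorProduct.assoc R R K M K).symm.toCoalgHom
  (mulOuter.comp (Coalgebra.TensorProduct.map (CoalgHom.id R M) twistInner)).comp
    (Coalgebra.TensorProduct.assoc R R M K (M ⊗[R] K)).toCoalgHom

theorem crossedMul_tmul (T : M ⊗[R] K →ₗc[R] M ⊗[R] K) (m n : M) (k l : K) :
    crossedMul T ((m ⊗ₜ[R] k) ⊗ₜ[R] (n ⊗ₜ[R] l)) =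
      TensorProduct.map (LinearMap.mulLeft R m) (LinearMap.mulRight R l) (T (n ⊗ₜ[R] k)) := by
  have mulOuter_tmul (w : M ⊗[R] K) :
      TensorProduct.map (LinearMap.mul' R M) (LinearMap.mul' R K)
          ((TensorProduct.assoc R M M (K ⊗[R] K)).symm
            (m ⊗ₜ[R] TensorProduct.assoc R M K K (w ⊗ₜ[R] l))) =
        TensorProduct.map (LinearMap.mulLeft R m) (LinearMap.mulRight R l) w := by
    induction w with
    | zero => simp
    | tmul x y => simp
    | add x y hx hy => simp only [add_tmul, tmul_add, map_add, hx, hy]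
  exact mulOuter_tmul _

end CrossedProduct

/-- The map `φ ↦ (φ₍₁₎ ⊗ φ₍₃₎) ⊗ φ₍₂₎` separating the outer legs of the iterated comultiplication
from the inner one. -/
noncomputable def outerInnerComul (R C : Type*) [CommSemiring R] [AddCommMonoid C] [Module R C]
    [Coalgebra R C] : C →ₗ[R] (C ⊗[R] C) ⊗[R] C :=
  (TensorProduct.assoc R C C C).symm.toLinearMap ∘ₗ
    TensorProduct.map LinearMap.id (TensorProduct.comm R C C).toLinearMap ∘ₗ
      TensorProduct.map LinearMap.id comul ∘ₗ comul

theorem map_outerInnerComul {R C V W : Type*} [CommSemiring R] [AddCommMonoid C] [Module R C]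
    [Coalgebra R C] [AddCommMonoid V] [Module R V] [AddCommMonoid W] [Module R W]
    (L : C →ₗ[R] V →ₗ[R] W) (Q : C →ₗ[R] V) {ι : Type*} {c : C} (r : Coalgebra.Repr R c ι) :
    TensorProduct.map (TensorProduct.lift L ∘ₗ TensorProduct.map LinearMap.id Q) LinearMap.id
        (outerInnerComul R C c) =
      ∑ i ∈ r.index, TensorProduct.map (L (r.left i) ∘ₗ Q) LinearMap.id
        (TensorProduct.comm R C C (comul (r.right i))) := by
  have map_assoc_symm (a : C) (w : C ⊗[R] C) :
      TensorProduct.map (TensorProduct.lift L ∘ₗ TensorProduct.map LinearMap.id Q) LinearMap.id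
          ((TensorProduct.assoc R C C C).symm (a ⊗ₜ[R] w)) =
        TensorProduct.map (L a ∘ₗ Q) LinearMap.id w := by
    induction w with
    | zero => simp
    | tmul x y => simp
    | add x y hx hy => simp only [tmul_add, map_add, hx, hy]
  simp only [outerInnerComul, LinearMap.comp_apply, LinearEquiv.coe_coe, ← r.eq, map_sum,
    map_tmul, LinearMap.id_apply, map_assoc_symm]

theorem pairingTwist_coopposite_tmul {R M H : Type*} [CommSemiring R] [AddCommMonoid M]
    [Module R M] [Coalgebra R M] [Semiring H] [HopfAlgebra R H] {Si : H →ₗ[R] H}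
    (h₁ : ∀ x, Si (HopfAlgebra.antipode R x) = x) (h₂ : ∀ x, HopfAlgebra.antipode R (Si x) = x)
    (β : Coopposite H →ₐ[R] WithConv (M →ₗ[R] R)) {actL actR : H →ₗ[R] M →ₗ[R] M}
    (hL : ∀ φ : H, actL φ = leftHit (β φ)) (hR : ∀ φ : H, actR φ = rightHit (β φ))
    (m : M) (φ : H) :
    letI := Coopposite.hopfAlgebra Si h₁ h₂
    (pairingTwist β (m ⊗ₜ[R] φ) : M ⊗[R] H) =
      TensorProduct.map
        (TensorProduct.lift actL ∘ₗ TensorProduct.map LinearMap.id (actR.flip m ∘ₗ Si))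
        LinearMap.id (outerInnerComul R H φ) := by
  let s := ℛ R φ
  let := Coopposite.hopfAlgebra Si h₁ h₂
  let sCop : Coalgebra.Repr R (show Coopposite H from φ) _ :=
    { index := s.index
      left := s.right
      right := s.left
      eq := (map_sum (TensorProduct.comm R H H) _ _).symm.trans (congrArg _ s.eq) }
  rw [map_outerInnerComul _ _ s]
  refine (pairingTwist_tmul β m sCop).trans (Finset.sum_congr rfl fun i _ ↦ ?_)
  have legs : actL (s.left i) ∘ₗ actR.flip m ∘ₗ Si =
      leftHit (β (s.left i)) ∘ₗ rightHit.flip m ∘ₗ β.toLinearMap ∘ₗ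
        HopfAlgebra.antipode R (A := Coopposite H) := by
    rw [hL]
    ext x
    exact congrArg (leftHit (β (s.left i))) (LinearMap.congr_fun (hR (Si x)) m)
  rw [legs]
  rfl

theorem crossedMul_pairingTwist_coopposite_tmul {R M H : Type*} [CommSemiring R] [Semiring M]
    [Bialgebra R M] [Semiring H] [HopfAlgebra R H] {Si : H →ₗ[R] H}
    (h₁ : ∀ x, Si (HopfAlgebra.antipode R x) = x) (h₂ : ∀ x, HopfAlgebra.antipode R (Si x) = x)
    (β : Coopposite H →ₐ[R] WithConv (M →ₗ[R] R)) {actL actR : H →ₗ[R] M →ₗ[R] M}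
    (hL : ∀ φ : H, actL φ = leftHit (β φ)) (hR : ∀ φ : H, actR φ = rightHit (β φ))
    (m n : M) (φ ψ : H) :
    letI := Coopposite.hopfAlgebra Si h₁ h₂
    (crossedMul (pairingTwist β) ((m ⊗ₜ[R] φ) ⊗ₜ[R] (n ⊗ₜ[R] ψ)) : M ⊗[R] H) =
      TensorProduct.map
        (LinearMap.mulLeft R m ∘ₗ TensorProduct.lift actL ∘ₗ
          TensorProduct.map LinearMap.id (actR.flip n ∘ₗ Si))
        (LinearMap.mulRight R ψ) (outerInnerComul R H φ) := by
  let := Coopposite.hopfAlgebra Si h₁ h₂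
  have crossedMul_eq : crossedMul (pairingTwist β) ((m ⊗ₜ[R] φ) ⊗ₜ[R] (n ⊗ₜ[R] ψ)) =
      TensorProduct.map (LinearMap.mulLeft R m) (LinearMap.mulRight R ψ)
        (TensorProduct.map
          (TensorProduct.lift actL ∘ₗ TensorProduct.map LinearMap.id (actR.flip n ∘ₗ Si))
          LinearMap.id (outerInnerComul R H φ)) :=
    (crossedMul_tmul (pairingTwist β) m n φ ψ).trans <|
      congrArg (TensorProduct.map (LinearMap.mulLeft R m) (LinearMap.mulRight R ψ))
        (pairingTwist_coopposite_tmul h₁ h₂ β hL hR n φ)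
  exact crossedMul_eq.trans (by rw [TensorProduct.map_map, LinearMap.comp_id])

theorem statement12_general {R G H M : Type*} [CommSemiring R] [AddCommMonoid G] [Module R G]
    [Coalgebra R G] [Semiring H] [HopfAlgebra R H] [Semiring M] [Bialgebra R M]
    (Si : H →ₗ[R] H) (hSi₁ : ∀ x, Si (HopfAlgebra.antipode R x) = x)
    (hSi₂ : ∀ x, HopfAlgebra.antipode R (Si x) = x)
    (p : G →ₗ[R] H →ₗ[R] R)
    (hp_mul : ∀ a φ ψ, p a (φ * ψ) =
      LinearMap.mul' R R (TensorProduct.map (p.flip φ) (p.flip ψ) (comul a)))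
    (hp_one : ∀ a, p a 1 = counit (R := R) a)
    (κ : M →ₗ[R] G)
    (hκ_comul : ∀ m, comul (R := R) (κ m) = TensorProduct.map κ κ (comul m))
    (hκ_counit : ∀ m, counit (R := R) (κ m) = (counit (R := R) m : R))
    (lam : M →ₗ[R] G ⊗[R] M)
    (hlam : ∀ m, lam m = TensorProduct.map κ LinearMap.id (comul m))
    (rho : M →ₗ[R] M ⊗[R] G)
    (hrho : ∀ m, rho m = TensorProduct.map LinearMap.id κ (comul m))
    (actL : H →ₗ[R] M →ₗ[R] M)
    (h_actL : ∀ φ m, actL φ m =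
      TensorProduct.rid R M (TensorProduct.map LinearMap.id (p.flip φ) (rho m)))
    (actR : H →ₗ[R] M →ₗ[R] M)
    (h_actR : ∀ φ m, actR φ m =
      TensorProduct.lid R M (TensorProduct.map (p.flip φ) LinearMap.id (lam m)))
    (mulMH : M ⊗[R] H →ₗ[R] M ⊗[R] H →ₗ[R] M ⊗[R] H)
    (hmulMH : ∀ m n φ ψ, mulMH (m ⊗ₜ[R] φ) (n ⊗ₜ[R] ψ) =
      TensorProduct.map
        (LinearMap.mulLeft R m ∘ₗ TensorProduct.lift actL ∘ₗ
          TensorProduct.map LinearMap.id (actR.flip n ∘ₗ Si))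
        (LinearMap.mulRight R ψ) (outerInnerComul R H φ))
    (mulBB : (M ⊗[R] H) ⊗[R] (M ⊗[R] H) →ₗ[R]
      (M ⊗[R] H) ⊗[R] (M ⊗[R] H) →ₗ[R] (M ⊗[R] H) ⊗[R] (M ⊗[R] H))
    (hmulBB : ∀ x y x' y', mulBB (x ⊗ₜ[R] y) (x' ⊗ₜ[R] y') = mulMH x x' ⊗ₜ[R] mulMH y y')
    (ΔB : M ⊗[R] H →ₗ[R] (M ⊗[R] H) ⊗[R] (M ⊗[R] H))
    (hΔB : ∀ m ψ, ΔB (m ⊗ₜ[R] ψ) = TensorProduct.tensorTensorTensorComm R M M H H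
      (comul m ⊗ₜ[R] TensorProduct.comm R H H (comul ψ)))
    (εB : M ⊗[R] H →ₗ[R] R)
    (hεB : ∀ m ψ, εB (m ⊗ₜ[R] ψ) = counit (R := R) m * counit (R := R) ψ) :
    (∀ x y, ΔB (mulMH x y) = mulBB (ΔB x) (ΔB y)) ∧
    ΔB (1 ⊗ₜ[R] 1) = (1 ⊗ₜ[R] 1) ⊗ₜ[R] (1 ⊗ₜ[R] 1) ∧
    (∀ x y, εB (mulMH x y) = εB x * εB y) ∧
    εB (1 ⊗ₜ[R] 1) = 1 := by
  let := Coopposite.hopfAlgebra Si hSi₁ hSi₂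
  let βH : H →ₐ[R] WithConv (M →ₗ[R] R) := pairingAlgHom (p ∘ₗ κ)
    (fun m φ ψ ↦ by
      rw [LinearMap.comp_apply, hp_mul, hκ_comul, TensorProduct.map_map]
      rfl)
    (fun m ↦ (hp_one _).trans (hκ_counit m))
  let β : Coopposite H →ₐ[R] WithConv (M →ₗ[R] R) := βH
  have actL_eq (φ : H) : actL φ = leftHit (β φ) := by
    ext m
    rw [h_actL, hrho, TensorProduct.map_map]
    rfl
  have actR_eq (φ : H) : actR φ = rightHit (β φ) := by
    ext m
    rw [h_actR, hlam, TensorProduct.map_map]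
    rfl
  let F := crossedMul (pairingTwist β)
  have lift_mulMH : TensorProduct.lift mulMH = F.toLinearMap :=
    TensorProduct.ext_fourfold' fun m φ n ψ ↦
      (hmulMH m n φ ψ).trans
        (crossedMul_pairingTwist_coopposite_tmul hSi₁ hSi₂ β actL_eq actR_eq m n φ ψ).symm
  have mulMH_eq (x y : M ⊗[R] H) : mulMH x y = F (x ⊗ₜ[R] y) :=
    LinearMap.congr_fun lift_mulMH (x ⊗ₜ[R] y)
  obtain rfl : ΔB = comul (R := R) (A := M ⊗[R] Coopposite H) := TensorProduct.ext' hΔB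
  obtain rfl : εB = counit (R := R) (A := M ⊗[R] Coopposite H) :=
    TensorProduct.ext' fun m ψ ↦ (hεB m ψ).trans (mul_comm _ _)
  refine ⟨fun x y ↦ ?_, Bialgebra.comul_one (A := M ⊗[R] Coopposite H), fun x y ↦ ?_,
    Bialgebra.counit_one (A := M ⊗[R] Coopposite H)⟩
  · rw [mulMH_eq]
    exact comul_coalgHom_tmul F (fun x y x' y' ↦ (hmulBB x y x' y').trans
      (congrArg₂ _ (mulMH_eq x x') (mulMH_eq y y'))) x y
  · rw [mulMH_eq]
    exact counit_coalgHom_tmul F x y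

/-- Let `G` be a finite-dimensional Hopf algebra with dual `Ĝ = H` (encoded
by a Hopf pairing `p`), and let `M` be a bialgebra with a commuting pair of `G`-coactions
`(λ, ρ)` given by `λ = (κ ⊗ id) ∘ Δ_M`, `ρ = (id ⊗ κ) ∘ Δ_M` for a bialgebra map `κ : M → G`.
Then on the diagonal crossed product `B := M ⋈ Ĝ`, the maps
`Δ_B(m ⋈ ψ) := (m⁽¹⁾ ⋈ ψ₍₂₎) ⊗ (m⁽²⁾ ⋈ ψ₍₁₎)` and `ε_B(m ⋈ ψ) := ε_M(m)ε̂(ψ)` are algebra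
homomorphisms `Δ_B : B → B ⊗ B` and `ε_B : B → ℂ`. -/
theorem statement12
    (G H M : Type*) [Ring G] [HopfAlgebra ℂ G] [Ring H] [HopfAlgebra ℂ H]
    [Ring M] [Bialgebra ℂ M]
    [FiniteDimensional ℂ G] [FiniteDimensional ℂ H]
    -- inverse antipode of `Ĝ = H`
    (SiH : H →ₗ[ℂ] H)
    (hSiH1 : ∀ x : H, SiH (HopfAlgebra.antipode (R := ℂ) x) = x)
    (hSiH2 : ∀ x : H, HopfAlgebra.antipode (R := ℂ) (SiH x) = x)
    -- the Hopf pairing `⟨·|·⟩ : G ⊗ Ĝ → ℂ`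
    (p : G →ₗ[ℂ] H →ₗ[ℂ] ℂ)
    (hp_mulG : ∀ (a b : G) (φ : H),
      p (a * b) φ =
        LinearMap.mul' ℂ ℂ (TensorProduct.map (p a) (p b) (Coalgebra.comul (R := ℂ) φ)))
    (hp_oneG : ∀ φ : H, p 1 φ = Coalgebra.counit (R := ℂ) φ)
    (hp_mulH : ∀ (a : G) (φ ψ : H),
      p a (φ * ψ) =
        LinearMap.mul' ℂ ℂ
          (TensorProduct.map (p.flip φ) (p.flip ψ) (Coalgebra.comul (R := ℂ) a)))
    (hp_oneH : ∀ a : G, p a 1 = Coalgebra.counit (R := ℂ) a)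
    (hp_antipode : ∀ (a : G) (φ : H),
      p (HopfAlgebra.antipode (R := ℂ) a) φ = p a (HopfAlgebra.antipode (R := ℂ) φ))
    (hp_nondegG : ∀ a : G, (∀ φ : H, p a φ = 0) → a = 0)
    (hp_nondegH : ∀ φ : H, (∀ a : G, p a φ = 0) → φ = 0)
    -- the bialgebra map `κ : M → G`
    (κ : M →ₗ[ℂ] G)
    (hκ_mul : ∀ m n : M, κ (m * n) = κ m * κ n)
    (hκ_one : κ 1 = 1)
    (hκ_comul : ∀ m : M,
      Coalgebra.comul (R := ℂ) (κ m) =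
        TensorProduct.map κ κ (Coalgebra.comul (R := ℂ) m))
    (hκ_counit : ∀ m : M,
      Coalgebra.counit (R := ℂ) (κ m) = (Coalgebra.counit (R := ℂ) m : ℂ))
    -- the coactions `λ = (κ ⊗ id) ∘ Δ_M` and `ρ = (id ⊗ κ) ∘ Δ_M`
    (lam : M →ₗ[ℂ] G ⊗[ℂ] M)
    (hlam : ∀ m : M,
      lam m = TensorProduct.map κ LinearMap.id (Coalgebra.comul (R := ℂ) m))
    (rho : M →ₗ[ℂ] M ⊗[ℂ] G)
    (hrho : ∀ m : M,
      rho m = TensorProduct.map LinearMap.id κ (Coalgebra.comul (R := ℂ) m))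
    -- the dual actions `▷ = actL` (dual to `ρ`) and `◁ = actR` (dual to `λ`) of `Ĝ` on `M`
    (actL : H →ₗ[ℂ] M →ₗ[ℂ] M)
    (h_actL : ∀ (φ : H) (m : M),
      actL φ m =
        (TensorProduct.rid ℂ M)
          (TensorProduct.map LinearMap.id (p.flip φ) (rho m)))
    (actR : H →ₗ[ℂ] M →ₗ[ℂ] M)
    (h_actR : ∀ (φ : H) (m : M),
      actR φ m =
        (TensorProduct.lid ℂ M)
          (TensorProduct.map (p.flip φ) LinearMap.id (lam m)))
    -- the diagonal crossed product `B = M ⋈ Ĝ`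
    (mulMH : M ⊗[ℂ] H →ₗ[ℂ] M ⊗[ℂ] H →ₗ[ℂ] M ⊗[ℂ] H)
    (hmulMH : ∀ (m n : M) (φ ψ : H),
      mulMH (m ⊗ₜ[ℂ] φ) (n ⊗ₜ[ℂ] ψ) =
        TensorProduct.map
          (LinearMap.mulLeft ℂ m ∘ₗ TensorProduct.lift actL ∘ₗ
            TensorProduct.map LinearMap.id (actR.flip n ∘ₗ SiH))
          (LinearMap.mulRight ℂ ψ) (sweedlerShuffle H φ))
    -- the product on `B ⊗ B`
    (mulBB : (M ⊗[ℂ] H) ⊗[ℂ] (M ⊗[ℂ] H) →ₗ[ℂ]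
      (M ⊗[ℂ] H) ⊗[ℂ] (M ⊗[ℂ] H) →ₗ[ℂ] (M ⊗[ℂ] H) ⊗[ℂ] (M ⊗[ℂ] H))
    (hmulBB : ∀ x y x' y' : M ⊗[ℂ] H,
      mulBB (x ⊗ₜ[ℂ] y) (x' ⊗ₜ[ℂ] y') = (mulMH x x') ⊗ₜ[ℂ] (mulMH y y'))
    -- the coproduct `Δ_B(m ⋈ ψ) = (m⁽¹⁾ ⋈ ψ₍₂₎) ⊗ (m⁽²⁾ ⋈ ψ₍₁₎)`
    (ΔB : M ⊗[ℂ] H →ₗ[ℂ] (M ⊗[ℂ] H) ⊗[ℂ] (M ⊗[ℂ] H))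
    (hΔB : ∀ (m : M) (ψ : H),
      ΔB (m ⊗ₜ[ℂ] ψ) =
        (TensorProduct.tensorTensorTensorComm ℂ M M H H)
          ((Coalgebra.comul (R := ℂ) m) ⊗ₜ[ℂ]
            ((TensorProduct.comm ℂ H H) (Coalgebra.comul (R := ℂ) ψ))))
    -- the counit `ε_B(m ⋈ ψ) = ε_M(m)·ε̂(ψ)`
    (εB : M ⊗[ℂ] H →ₗ[ℂ] ℂ)
    (hεB : ∀ (m : M) (ψ : H),
      εB (m ⊗ₜ[ℂ] ψ) = Coalgebra.counit (R := ℂ) m * Coalgebra.counit (R := ℂ) ψ) :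
    -- `Δ_B` is an algebra homomorphism `B → B ⊗ B`
    (∀ x y : M ⊗[ℂ] H, ΔB (mulMH x y) = mulBB (ΔB x) (ΔB y)) ∧
    ΔB ((1 : M) ⊗ₜ[ℂ] (1 : H)) =
      ((1 : M) ⊗ₜ[ℂ] (1 : H)) ⊗ₜ[ℂ] ((1 : M) ⊗ₜ[ℂ] (1 : H)) ∧
    -- `ε_B` is an algebra homomorphism `B → ℂ`
    (∀ x y : M ⊗[ℂ] H, εB (mulMH x y) = εB x * εB y) ∧
    εB ((1 : M) ⊗ₜ[ℂ] (1 : H)) = 1 := by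
  exact statement12_general SiH hSiH1 hSiH2 p hp_mulH hp_oneH κ hκ_comul hκ_counit lam hlam rho hrho
    actL h_actL actR h_actR mulMH hmulMH mulBB hmulBB ΔB hΔB εB hεB
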